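/- Let (G, ξ) be a centered bivariate Gaussian vector with covariance matrix [[a, c], [c, b]], a, b > 0, |c| < √(ab), and M = G + ξ. Then the conditional variance of G given {M > m} satisfies Var(G | M > m) → (ab - c²)/(a + b + 2c) as m → ∞; more precisely Var(G | M > m) = (ab-c²)/(a+b+2c) + (a+c)²/m² + o(m⁻²). -/

import Mathlib

open MeasureTheory ProbabilityTheory Filter Asymptotics Real

/-- Expectation of `X` conditioned on an event `s` (i.e. `E[X·1ₛ]/P(s)`). -/
noncomputable def condExpEvent {Ω : Type*} [MeasureSpace Ω] (X : Ω → ℝ) (s : Set Ω) : ℝ :=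
  (∫ ω in s, X ω) / (ℙ s).toReal

/-- Variance of `X` conditioned on an event `s`. -/
noncomputable def condVarEvent {Ω : Type*} [MeasureSpace Ω] (X : Ω → ℝ) (s : Set Ω) : ℝ :=
  condExpEvent (fun ω => X ω ^ 2) s - (condExpEvent X s) ^ 2

/-- Covariance of `X` and `Y` conditioned on an event `s`. -/
noncomputable def condCovEvent {Ω : Type*} [MeasureSpace Ω] (X Y : Ω → ℝ) (s : Set Ω) : ℝ :=
  condExpEvent (fun ω => X ω * Y ω) s - condExpEvent X s * condExpEvent Y s

/-!
Regressing `X` on `M` with slope `β = Cov(X, M) / Var(M)` leaves a Gaussian residual independent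
of `M`, so conditioning on `{M > m}` keeps the residual variance `Var(X) - Cov(X, M)² / Var(M)` and
adds `β² Var(M | M > m)`. For `M` with mean `μ` and variance `v`, the substitution
`x = m + v t / (m - μ)` turns the Gaussian density on `(m, ∞)` into a multiple of
`exp (-t - ε t²)` on `(0, ∞)`, where `ε = v / (2 (m - μ)²) → 0`. By dominated convergence the
moments of the scaled overshoot tend to those of the exponential law, whence
`m² Var(M | M > m) → v²`.
-/

open scoped Topology NNReal ENNReal Nat

section Conditioning

variable {Ω E F : Type*} {mΩ : MeasurableSpace Ω} {mE : MeasurableSpace E}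
  {mF : MeasurableSpace F} {P : Measure Ω}

lemma integral_cond (P : Measure Ω) (s : Set Ω) (f : Ω → ℝ) :
    ∫ ω, f ω ∂P[|s] = (∫ ω in s, f ω ∂P) / P.real s := by
  rw [ProbabilityTheory.cond, integral_smul_measure, ENNReal.toReal_inv, smul_eq_mul,
    measureReal_def, inv_mul_eq_div]

lemma memLp_cond {V : Type*} [NormedAddCommGroup V] {f : Ω → V} {p : ℝ≥0∞} {s : Set Ω}
    (hf : MemLp f p P) (hs : P s ≠ 0) : MemLp f p P[|s] :=
  (hf.restrict s).smul_measure (ENNReal.inv_ne_top.2 hs)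

lemma map_cond_preimage {f : Ω → E} (hf : AEMeasurable f P) {s : Set E} (hs : MeasurableSet s) :
    (P[|f ⁻¹' s]).map f = (P.map f)[|s] := by
  rw [ProbabilityTheory.cond, ProbabilityTheory.cond, Measure.map_smul,
    Measure.restrict_map_of_aemeasurable hf hs, Measure.map_apply_of_aemeasurable hf hs]

lemma cond_prod_univ_prod (μ : Measure E) [IsProbabilityMeasure μ] (ν : Measure F) [SFinite ν]
    (s : Set F) : (μ.prod ν)[|Set.univ ×ˢ s] = μ.prod ν[|s] := by
  rw [ProbabilityTheory.cond, ProbabilityTheory.cond, Measure.prod_smul_right,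
    ← Measure.prod_restrict, Measure.restrict_univ, Measure.prod_prod, measure_univ, one_mul]

lemma map_prodMk_cond_preimage_of_indepFun [IsProbabilityMeasure P] {X : Ω → E} {Y : Ω → F}
    (hX : AEMeasurable X P) (hY : AEMeasurable Y P) (hXY : X ⟂ᵢ[P] Y)
    {s : Set F} (hs : MeasurableSet s) :
    (P[|Y ⁻¹' s]).map (fun ω ↦ (X ω, Y ω)) = (P.map X).prod (P.map Y)[|s] := by
  have := Measure.isProbabilityMeasure_map hX
  have hset : Y ⁻¹' s = (fun ω ↦ (X ω, Y ω)) ⁻¹' (Set.univ ×ˢ s) := by ext; simp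
  rw [hset, map_cond_preimage (hX.prodMk hY) (MeasurableSet.univ.prod hs),
    (indepFun_iff_map_prod_eq_prod_map_map hX hY).1 hXY, cond_prod_univ_prod]

lemma variance_add_const_mul_cond_of_indepFun [IsProbabilityMeasure P] {X Y : Ω → ℝ}
    (hX : MemLp X 2 P) (hY : MemLp Y 2 P) (hXY : X ⟂ᵢ[P] Y) (β : ℝ)
    {s : Set ℝ} (hs : MeasurableSet s) (hYs : P.map Y s ≠ 0) :
    Var[fun ω ↦ X ω + β * Y ω; P[|Y ⁻¹' s]] =
      Var[X; P] + β ^ 2 * Var[id; (P.map Y)[|s]] := by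
  have hXm := hX.aemeasurable
  have hYm := hY.aemeasurable
  have := Measure.isProbabilityMeasure_map hXm
  have := Measure.isProbabilityMeasure_map hYm
  have := cond_isProbabilityMeasure hYs
  have hlaw := map_prodMk_cond_preimage_of_indepFun hXm hYm hXY hs
  have hXid : MemLp id 2 (P.map X) := (memLp_map_measure_iff aestronglyMeasurable_id hXm).2 hX
  have hYid : MemLp id 2 (P.map Y)[|s] :=
    memLp_cond ((memLp_map_measure_iff aestronglyMeasurable_id hYm).2 hY) hYs
  calc Var[fun ω ↦ X ω + β * Y ω; P[|Y ⁻¹' s]]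
      = Var[fun p : ℝ × ℝ ↦ id p.1 + β * id p.2; (P.map X).prod (P.map Y)[|s]] := by
        rw [← hlaw, variance_map (by fun_prop)
          ((hXm.prodMk hYm).mono_ac cond_absolutelyContinuous)]
        rfl
    _ = Var[X; P] + β ^ 2 * Var[id; (P.map Y)[|s]] := by
        rw [variance_add_prod hXid (hYid.const_mul β), variance_id_map hXm, variance_const_mul]

lemma condExpEvent_eq_integral_cond {Ω : Type*} [MeasureSpace Ω] (X : Ω → ℝ) (s : Set Ω) :
    condExpEvent X s = ∫ ω, X ω ∂ℙ[|s] :=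
  (integral_cond ℙ s X).symm

lemma condVarEvent_eq_variance_cond {Ω : Type*} [MeasureSpace Ω]
    [IsFiniteMeasure (ℙ : Measure Ω)] {X : Ω → ℝ} (hX : MemLp X 2) (s : Set Ω) :
    condVarEvent X s = Var[X; ℙ[|s]] := by
  simp only [condVarEvent, condExpEvent_eq_integral_cond]
  rcases eq_or_ne (ℙ s) 0 with hs | hs
  · simp [cond_eq_zero_of_meas_eq_zero hs]
  · have := cond_isProbabilityMeasure hs
    exact (variance_eq_sub (memLp_cond hX hs)).symm

end Conditioning

section GaussianOvershoot

/-- The `k`-th moment of the density `exp (-t - ε * t ^ 2)` on `(0, ∞)`, not normalized. Up to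
scaling, the overshoot of a Gaussian variable above a level has this density. -/
noncomputable def dampedExpMoment (k : ℕ) (ε : ℝ) : ℝ :=
  ∫ t in Set.Ioi (0 : ℝ), t ^ k * exp (-t - ε * t ^ 2)

lemma integrableOn_pow_mul_exp_neg_Ioi (k : ℕ) :
    IntegrableOn (fun t : ℝ ↦ t ^ k * exp (-t)) (Set.Ioi 0) := by
  simpa [mul_comm] using GammaIntegral_convergent (s := k + 1) (by positivity)

lemma integral_pow_mul_exp_neg_Ioi (k : ℕ) :
    ∫ t in Set.Ioi (0 : ℝ), t ^ k * exp (-t) = k ! := by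
  simpa [mul_comm, Gamma_nat_eq_factorial] using
    (Gamma_eq_integral (s := k + 1) (by positivity)).symm

lemma tendsto_dampedExpMoment (k : ℕ) :
    Tendsto (dampedExpMoment k) (𝓝[≥] 0) (𝓝 (k ! : ℝ)) := by
  rw [← integral_pow_mul_exp_neg_Ioi k]
  refine tendsto_integral_filter_of_dominated_convergence _ (.of_forall fun ε ↦ by fun_prop) ?_
    (integrableOn_pow_mul_exp_neg_Ioi k) (.of_forall fun t ↦ ?_)
  · filter_upwards [self_mem_nhdsWithin] with ε (hε : 0 ≤ ε)
    filter_upwards [ae_restrict_mem measurableSet_Ioi] with t (ht : 0 < t)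
    rw [norm_of_nonneg (by positivity)]
    gcongr
    nlinarith [sq_nonneg t]
  · have hcont : Continuous fun ε : ℝ ↦ t ^ k * exp (-t - ε * t ^ 2) := by fun_prop
    simpa using (hcont.tendsto 0).mono_left nhdsWithin_le_nhds

lemma setIntegral_Ioi_eq_mul_integral_comp_add_mul (f : ℝ → ℝ) (m : ℝ) {r : ℝ} (hr : 0 < r) :
    ∫ x in Set.Ioi m, f x = r * ∫ t in Set.Ioi (0 : ℝ), f (m + r * t) := by
  have htranslate : ∫ y in Set.Ioi (0 : ℝ), f (m + y) = ∫ x in Set.Ioi m, f x := by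
    simpa using (measurePreserving_add_left volume m).setIntegral_preimage_emb
      (measurableEmbedding_addLeft m) f (Set.Ioi m)
  rw [integral_comp_mul_left_Ioi (fun y ↦ f (m + y)) 0 hr, mul_zero, htranslate, smul_eq_mul,
    mul_inv_cancel_left₀ hr.ne']

variable {μ m : ℝ} {v : ℝ≥0}

lemma gaussianPDFReal_add_div_mul (hv : v ≠ 0) (hm : m ≠ μ) (t : ℝ) :
    gaussianPDFReal μ v (m + v / (m - μ) * t) =
      gaussianPDFReal μ v m * exp (-t - v / (2 * (m - μ) ^ 2) * t ^ 2) := by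
  have hm' : m - μ ≠ 0 := sub_ne_zero.2 hm
  simp only [gaussianPDFReal, mul_assoc, ← exp_add]
  congr 2
  field_simp
  ring

lemma setIntegral_Ioi_sub_pow_gaussianReal (hv : v ≠ 0) (hm : μ < m) (k : ℕ) :
    ∫ x in Set.Ioi m, (x - m) ^ k ∂gaussianReal μ v =
      gaussianPDFReal μ v m * (v / (m - μ)) ^ (k + 1) *
        dampedExpMoment k (v / (2 * (m - μ) ^ 2)) := by
  have hr : 0 < v / (m - μ) := div_pos (by positivity) (sub_pos.2 hm)
  calc ∫ x in Set.Ioi m, (x - m) ^ k ∂gaussianReal μ v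
      = ∫ x in Set.Ioi m, gaussianPDFReal μ v x * (x - m) ^ k := by
        rw [gaussianReal_of_var_ne_zero _ hv, setIntegral_withDensity_eq_setIntegral_toReal_smul
          (measurable_gaussianPDF μ v) (.of_forall fun _ ↦ gaussianPDF_lt_top) _ measurableSet_Ioi]
        simp only [toReal_gaussianPDF, smul_eq_mul]
    _ = v / (m - μ) * ∫ t in Set.Ioi (0 : ℝ), gaussianPDFReal μ v m * (v / (m - μ)) ^ k *
          (t ^ k * exp (-t - v / (2 * (m - μ) ^ 2) * t ^ 2)) := by
        rw [setIntegral_Ioi_eq_mul_integral_comp_add_mul _ m hr]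
        congr 2 with t
        rw [gaussianPDFReal_add_div_mul hv hm.ne']
        ring
    _ = _ := by
        rw [integral_const_mul, dampedExpMoment]
        ring

lemma gaussianReal_Ioi_ne_zero (hv : v ≠ 0) : gaussianReal μ v (Set.Ioi m) ≠ 0 :=
  fun h ↦ by simpa using gaussianReal_absolutelyContinuous' μ hv h

lemma integral_sub_pow_cond_gaussianReal (hv : v ≠ 0) (hm : μ < m) (k : ℕ) :
    ∫ x, (x - m) ^ k ∂(gaussianReal μ v)[|Set.Ioi m] =
      (v / (m - μ)) ^ k * (dampedExpMoment k (v / (2 * (m - μ) ^ 2)) /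
        dampedExpMoment 0 (v / (2 * (m - μ) ^ 2))) := by
  have hmass : (gaussianReal μ v).real (Set.Ioi m) = gaussianPDFReal μ v m * (v / (m - μ)) *
      dampedExpMoment 0 (v / (2 * (m - μ) ^ 2)) := by
    simpa using setIntegral_Ioi_sub_pow_gaussianReal hv hm 0
  have hpdf := (gaussianPDFReal_pos μ v m hv).ne'
  have hsub : m - μ ≠ 0 := (sub_pos.2 hm).ne'
  rw [integral_cond, setIntegral_Ioi_sub_pow_gaussianReal hv hm, hmass, pow_succ]
  field_simp

lemma tendsto_div_two_mul_sub_sq_atTop (μ : ℝ) {c : ℝ} (hc : 0 ≤ c) :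
    Tendsto (fun m : ℝ ↦ c / (2 * (m - μ) ^ 2)) atTop (𝓝[≥] 0) := by
  have hsub : Tendsto (fun m : ℝ ↦ m - μ) atTop atTop :=
    tendsto_atTop_add_const_right _ (-μ) tendsto_id
  have hsq : Tendsto (fun m : ℝ ↦ 2 * (m - μ) ^ 2) atTop atTop :=
    ((tendsto_pow_atTop two_ne_zero).comp hsub).const_mul_atTop two_pos
  exact tendsto_nhdsWithin_iff.2
    ⟨hsq.const_div_atTop c, .of_forall fun m ↦ Set.mem_Ici.2 (by positivity)⟩

lemma tendsto_mul_div_sub_atTop (μ c : ℝ) :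
    Tendsto (fun m : ℝ ↦ m * (c / (m - μ))) atTop (𝓝 c) := by
  have hsub : Tendsto (fun m : ℝ ↦ m - μ) atTop atTop :=
    tendsto_atTop_add_const_right _ (-μ) tendsto_id
  have hlim : Tendsto (fun m : ℝ ↦ c + μ * (c / (m - μ))) atTop (𝓝 c) := by
    simpa using ((hsub.const_div_atTop c).const_mul μ).const_add c
  refine hlim.congr' ?_
  filter_upwards [hsub.eventually_ne_atTop 0] with m hm
  field_simp
  ring

lemma tendsto_pow_mul_integral_sub_pow_cond_gaussianReal (μ : ℝ) (hv : v ≠ 0) (k : ℕ) :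
    Tendsto (fun m ↦ m ^ k * ∫ x, (x - m) ^ k ∂(gaussianReal μ v)[|Set.Ioi m]) atTop
      (𝓝 (v ^ k * k !)) := by
  have hdamp := tendsto_div_two_mul_sub_sq_atTop μ v.coe_nonneg
  have hratio := ((tendsto_dampedExpMoment k).comp hdamp).div
    ((tendsto_dampedExpMoment 0).comp hdamp) (by simp)
  have hlim := ((tendsto_mul_div_sub_atTop μ v).pow k).mul hratio
  simp only [Nat.factorial_zero, Nat.cast_one, div_one] at hlim
  refine hlim.congr' ?_
  filter_upwards [eventually_gt_atTop μ] with m hm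
  rw [integral_sub_pow_cond_gaussianReal hv hm, mul_pow, mul_assoc]
  rfl

lemma tendsto_sq_mul_variance_cond_gaussianReal (μ : ℝ) (hv : v ≠ 0) :
    Tendsto (fun m ↦ m ^ 2 * Var[id; (gaussianReal μ v)[|Set.Ioi m]]) atTop (𝓝 (v ^ 2)) := by
  have hfirst := tendsto_pow_mul_integral_sub_pow_cond_gaussianReal μ hv 1
  have hsecond := tendsto_pow_mul_integral_sub_pow_cond_gaussianReal μ hv 2
  have hlim := hsecond.sub (hfirst.pow 2)
  have hconst : (v : ℝ) ^ 2 * (2)! - (v ^ 1 * (1)!) ^ 2 = v ^ 2 := by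
    norm_num [Nat.factorial]
    ring
  rw [hconst] at hlim
  refine hlim.congr fun m ↦ ?_
  have := cond_isProbabilityMeasure (gaussianReal_Ioi_ne_zero (μ := μ) (m := m) hv)
  have hoff : MemLp (fun x ↦ x - m) 2 (gaussianReal μ v)[|Set.Ioi m] :=
    (memLp_cond (memLp_id_gaussianReal 2) (gaussianReal_Ioi_ne_zero hv)).sub (memLp_const m)
  have hvar : Var[id; (gaussianReal μ v)[|Set.Ioi m]] =
      ∫ x, (x - m) ^ 2 ∂(gaussianReal μ v)[|Set.Ioi m] -
        (∫ x, x - m ∂(gaussianReal μ v)[|Set.Ioi m]) ^ 2 := by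
    rw [← variance_sub_const aestronglyMeasurable_id m]
    exact variance_eq_sub hoff
  simp only [pow_one]
  rw [hvar]
  ring

end GaussianOvershoot

section JointlyGaussian

variable {Ω : Type*} {mΩ : MeasurableSpace Ω} {P : Measure Ω} {X Y : Ω → ℝ}

lemma hasGaussianLaw_prodMk_of_forall_linearCombination
    (h : ∀ u v : ℝ, HasGaussianLaw (fun ω ↦ u * X ω + v * Y ω) P) :
    HasGaussianLaw (fun ω ↦ (X ω, Y ω)) P := by
  have hX : AEMeasurable X P := by simpa using (h 1 0).aemeasurable
  have hY : AEMeasurable Y P := by simpa using (h 0 1).aemeasurable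
  refine ⟨isGaussian_of_isGaussian_map fun L ↦ ?_⟩
  have hL : L ∘ (fun ω ↦ (X ω, Y ω)) = fun ω ↦ L (1, 0) * X ω + L (0, 1) * Y ω := by
    ext ω
    have hbasis : (X ω, Y ω) = X ω • ((1 : ℝ), (0 : ℝ)) + Y ω • ((0 : ℝ), (1 : ℝ)) := by simp
    simp only [Function.comp_apply]
    rw [hbasis, map_add, map_smul, map_smul]
    simp [mul_comm]
  rw [AEMeasurable.map_map_of_aemeasurable (by fun_prop) (hX.prodMk hY), hL]
  exact (h _ _).isGaussian_map

lemma covariance_sub_regression_eq_zero [IsProbabilityMeasure P] (hX : MemLp X 2 P)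
    (hY : MemLp Y 2 P) (hvar : Var[Y; P] ≠ 0) :
    cov[fun ω ↦ X ω - cov[X, Y; P] / Var[Y; P] * Y ω, Y; P] = 0 := by
  rw [covariance_fun_sub_left hX (hY.const_mul _) hY, covariance_const_mul_left,
    covariance_self hY.aemeasurable, div_mul_cancel₀ _ hvar, sub_self]

lemma variance_sub_regression [IsProbabilityMeasure P] (hX : MemLp X 2 P) (hY : MemLp Y 2 P) :
    Var[fun ω ↦ X ω - cov[X, Y; P] / Var[Y; P] * Y ω; P] =
      Var[X; P] - cov[X, Y; P] ^ 2 / Var[Y; P] := by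
  rw [variance_fun_sub hX (hY.const_mul _), variance_const_mul, covariance_const_mul_right]
  rcases eq_or_ne Var[Y; P] 0 with h | h
  · simp [h]
  · field_simp
    ring

lemma indepFun_sub_regression (h : HasGaussianLaw (fun ω ↦ (X ω, Y ω)) P)
    (hvar : Var[Y; P] ≠ 0) : (fun ω ↦ X ω - cov[X, Y; P] / Var[Y; P] * Y ω) ⟂ᵢ[P] Y := by
  have := h.isProbabilityMeasure
  refine HasGaussianLaw.indepFun_of_covariance_eq_zero ?_
    (covariance_sub_regression_eq_zero h.fst.memLp_two h.snd.memLp_two hvar)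
  exact h.map_fun ((.fst ℝ ℝ ℝ - (cov[X, Y; P] / Var[Y; P]) • .snd ℝ ℝ ℝ : ℝ × ℝ →L[ℝ] ℝ).prod
    (.snd ℝ ℝ ℝ))

lemma variance_cond_preimage_of_hasGaussianLaw (h : HasGaussianLaw (fun ω ↦ (X ω, Y ω)) P)
    (hvar : Var[Y; P] ≠ 0) {s : Set ℝ} (hs : MeasurableSet s) (hYs : P.map Y s ≠ 0) :
    Var[X; P[|Y ⁻¹' s]] = Var[X; P] - cov[X, Y; P] ^ 2 / Var[Y; P] +
      (cov[X, Y; P] / Var[Y; P]) ^ 2 * Var[id; (P.map Y)[|s]] := by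
  have := h.isProbabilityMeasure
  have hX := h.fst.memLp_two
  have hY := h.snd.memLp_two
  have hres : MemLp (fun ω ↦ X ω - cov[X, Y; P] / Var[Y; P] * Y ω) 2 P := hX.sub (hY.const_mul _)
  rw [← variance_sub_regression hX hY, ← variance_add_const_mul_cond_of_indepFun
    hres hY (indepFun_sub_regression h hvar) _ hs hYs]
  simp only [sub_add_cancel]

lemma tendsto_sq_mul_variance_cond_sub (h : HasGaussianLaw (fun ω ↦ (X ω, Y ω)) P)
    (hvar : Var[Y; P] ≠ 0) :
    Tendsto (fun m ↦ m ^ 2 * (Var[X; P[|{ω | m < Y ω}]] -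
      (Var[X; P] - cov[X, Y; P] ^ 2 / Var[Y; P]))) atTop (𝓝 (cov[X, Y; P] ^ 2)) := by
  have hpos : 0 < Var[Y; P] := (variance_nonneg Y P).lt_of_ne' hvar
  have hv : Var[Y; P].toNNReal ≠ 0 := by simpa using hpos
  have hlaw := h.snd.map_eq_gaussianReal
  have hlim := (tendsto_sq_mul_variance_cond_gaussianReal (∫ ω, Y ω ∂P) hv).const_mul
    ((cov[X, Y; P] / Var[Y; P]) ^ 2)
  rw [coe_toNNReal _ hpos.le, ← mul_pow, div_mul_cancel₀ _ hvar] at hlim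
  refine hlim.congr fun m ↦ ?_
  have hcond := variance_cond_preimage_of_hasGaussianLaw h hvar (measurableSet_Ioi (a := m))
    (hlaw ▸ gaussianReal_Ioi_ne_zero hv)
  change _ = m ^ 2 * (Var[X; P[|Y ⁻¹' Set.Ioi m]] - _)
  rw [hcond, hlaw]
  ring

lemma variance_of_map_eq_gaussianReal {μ q : ℝ} (hq : 0 ≤ q)
    (h : P.map X = gaussianReal μ q.toNNReal) : Var[X; P] = q := by
  have hX : AEMeasurable X P := .of_map_ne_zero (h ▸ IsProbabilityMeasure.ne_zero _)
  rw [← variance_id_map hX, h, variance_id_gaussianReal, coe_toNNReal q hq]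

lemma covariance_self_add_right [IsProbabilityMeasure P] (hX : MemLp X 2 P) (hY : MemLp Y 2 P) :
    cov[X, fun ω ↦ X ω + Y ω; P] = (Var[X; P] + Var[fun ω ↦ X ω + Y ω; P] - Var[Y; P]) / 2 := by
  have hcov : cov[X, fun ω ↦ X ω + Y ω; P] = cov[X, X; P] + cov[X, Y; P] :=
    covariance_add_right hX hX hY
  rw [hcov, covariance_self hX.aemeasurable, variance_fun_add hX hY]
  ring

lemma hasGaussianLaw_prodMk_add (h : HasGaussianLaw (fun ω ↦ (X ω, Y ω)) P) :
    HasGaussianLaw (fun ω ↦ (X ω, X ω + Y ω)) P :=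
  h.map_fun ((ContinuousLinearMap.fst ℝ ℝ ℝ).prod
    (ContinuousLinearMap.fst ℝ ℝ ℝ + ContinuousLinearMap.snd ℝ ℝ ℝ))

end JointlyGaussian

lemma tendsto_and_isLittleO_of_tendsto_pow_mul_sub {f : ℝ → ℝ} {L C : ℝ} {n : ℕ} (hn : n ≠ 0)
    (h : Tendsto (fun m ↦ m ^ n * (f m - L)) atTop (𝓝 C)) :
    Tendsto f atTop (𝓝 L) ∧
      (fun m ↦ f m - (L + C / m ^ n)) =o[atTop] fun m ↦ m ^ (-(n : ℤ)) := by
  have hpow : ∀ᶠ m : ℝ in atTop, m ^ n ≠ 0 := by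
    filter_upwards [eventually_ne_atTop 0] with m hm using pow_ne_zero n hm
  constructor
  · have hlim : Tendsto (fun m ↦ L + m ^ n * (f m - L) / m ^ n) atTop (𝓝 L) := by
      simpa using (h.div_atTop (tendsto_pow_atTop hn)).const_add L
    refine hlim.congr' ?_
    filter_upwards [hpow] with m hm
    field_simp
    ring
  · have hlim : (fun m ↦ m ^ n * (f m - L) - C) =o[atTop] fun _ ↦ (1 : ℝ) :=
      (isLittleO_one_iff ℝ).2 (tendsto_sub_nhds_zero_iff.2 h)
    refine (hlim.mul_isBigO (isBigO_refl (fun m : ℝ ↦ m ^ (-(n : ℤ))) atTop)).congr' ?_ (by simp)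
    filter_upwards [hpow] with m hm
    rw [zpow_neg, zpow_natCast]
    field_simp
    ring

theorem gaussian_condVar_goal_general {Ω : Type*} [MeasureSpace Ω] {X M : Ω → ℝ}
    (h : HasGaussianLaw (fun ω ↦ (X ω, M ω)) ℙ) (hM : Var[M] ≠ 0) :
    Tendsto (fun m ↦ condVarEvent X {ω | m < M ω}) atTop (𝓝 (Var[X] - cov[X, M] ^ 2 / Var[M])) ∧
    (fun m ↦ condVarEvent X {ω | m < M ω} -
        (Var[X] - cov[X, M] ^ 2 / Var[M] + cov[X, M] ^ 2 / m ^ 2))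
      =o[atTop] fun m ↦ m ^ (-(2 : ℤ)) := by
  have := h.isProbabilityMeasure
  simp only [condVarEvent_eq_variance_cond h.fst.memLp_two]
  exact tendsto_and_isLittleO_of_tendsto_pow_mul_sub two_ne_zero
    (tendsto_sq_mul_variance_cond_sub h hM)

lemma add_add_two_mul_pos_of_abs_lt_sqrt_mul {a b c : ℝ} (ha : 0 ≤ a) (hb : 0 ≤ b)
    (hc : |c| < √(a * b)) : 0 < a + b + 2 * c := by
  have hamgm : 2 * √(a * b) ≤ a + b := by
    rw [sqrt_mul ha]
    nlinarith [sq_nonneg (√a - √b), sq_sqrt ha, sq_sqrt hb]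
  linarith [neg_abs_le c]

/-- Conditional variance of the goal:
`Var(G | M > m) → (ab - c²)/(a+b+2c)`, and more precisely
`Var(G | M > m) = (ab-c²)/(a+b+2c) + (a+c)²/m² + o(m⁻²)`. -/
theorem gaussian_condVar_goal {Ω : Type*} [MeasureSpace Ω] [IsProbabilityMeasure (ℙ : Measure Ω)]
    (G ξ : Ω → ℝ) (hG : Measurable G) (hξ : Measurable ξ)
    (a b c : ℝ) (ha : 0 < a) (hb : 0 < b) (hc : |c| < Real.sqrt (a * b))
    (hlaw : ∀ u v : ℝ, Measure.map (fun ω => u * G ω + v * ξ ω) ℙ =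
      gaussianReal 0 (Real.toNNReal (u ^ 2 * a + 2 * u * v * c + v ^ 2 * b))) :
    Tendsto (fun m : ℝ => condVarEvent G {ω | m < G ω + ξ ω}) atTop
      (nhds ((a * b - c ^ 2) / (a + b + 2 * c))) ∧
    (fun m : ℝ => condVarEvent G {ω | m < G ω + ξ ω} -
        ((a * b - c ^ 2) / (a + b + 2 * c) + (a + c) ^ 2 / m ^ 2))
      =o[atTop] (fun m : ℝ => m ^ (-(2 : ℤ))) := by
  have hpair : HasGaussianLaw (fun ω ↦ (G ω, ξ ω)) ℙ :=
    hasGaussianLaw_prodMk_of_forall_linearCombination fun u v ↦ ⟨hlaw u v ▸ inferInstance⟩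
  have hs : 0 < a + b + 2 * c := add_add_two_mul_pos_of_abs_lt_sqrt_mul ha.le hb.le hc
  have hvarG : Var[G] = a := variance_of_map_eq_gaussianReal ha.le (by simpa using hlaw 1 0)
  have hvarξ : Var[ξ] = b := variance_of_map_eq_gaussianReal hb.le (by simpa using hlaw 0 1)
  have hvarM : Var[fun ω ↦ G ω + ξ ω] = a + b + 2 * c :=
    variance_of_map_eq_gaussianReal hs.le (by simpa [add_right_comm] using hlaw 1 1)
  have hcov : cov[G, fun ω ↦ G ω + ξ ω] = a + c := by
    rw [covariance_self_add_right hpair.fst.memLp_two hpair.snd.memLp_two, hvarG, hvarM, hvarξ]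
    ring
  have hlimit : a - (a + c) ^ 2 / (a + b + 2 * c) = (a * b - c ^ 2) / (a + b + 2 * c) := by
    rw [eq_div_iff hs.ne', sub_mul, div_mul_cancel₀ _ hs.ne']
    ring
  simpa only [hvarG, hvarM, hcov, hlimit] using
    gaussian_condVar_goal_general (hasGaussianLaw_prodMk_add hpair) (hvarM ▸ hs.ne')
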